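/- arXiv:0812.0927 — 5 statements merged into one kernel-verified Lean document; each statement's English description precedes it below -/
import Mathlib

section
/- Let N ≥ 3, 1 < p < N, p* = Np/(N−p), and let Ω ⊂ ℝᴺ be a measurable set of finite Lebesgue measure. Let f : ℝ → ℝ be continuous with f(u) = o(|u|^{p*−1}) as |u| → ∞. Let (vₙ) be a sequence of measurable functions on Ω such that sup_n ∫_Ω |vₙ|^{p*} dx < ∞ and ∫_Ω |vₙ| dx → 0. Then ∫_Ω f(vₙ(x)) vₙ(x) dx → 0 as n → ∞. -/
open Filter MeasureTheory

/-!
The integrand is controlled by the two norms in the hypotheses. Since `f(u) = o(|u|^{p*-1})` at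
infinity and `f` is bounded on compact sets, for every `ε > 0` there is `C` with
`|f(u) u| ≤ ε |u|^{p*} + C |u|` for all `u` (`abs_mul_self_le`). Integrating, the first term is at
most `ε` times the uniform bound on `∫ |vₙ|^{p*}`, and the second tends to zero by convergence in
`L¹`.
-/

/-- Outside a compact set the growth condition gives the term `ε |u|^s`; on that compact set
continuity bounds `f` by `C`. -/
lemma abs_mul_self_le {f : ℝ → ℝ} (hf : Continuous f) {s : ℝ}
    (hgrowth : Tendsto (fun u : ℝ => f u / |u| ^ (s - 1)) (cocompact ℝ) (nhds 0))
    {ε : ℝ} (hε : 0 < ε) :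
    ∃ C : ℝ, 0 ≤ C ∧ ∀ u : ℝ, |f u * u| ≤ ε * |u| ^ s + C * |u| := by
  have h1 : ∀ᶠ u in cocompact ℝ, |f u / |u| ^ (s - 1)| < ε := by
    simpa only [Real.dist_eq, sub_zero] using Metric.tendsto_nhds.1 hgrowth ε hε
  obtain ⟨K, hK, hKu⟩ := mem_cocompact.1 h1
  obtain ⟨C, hC⟩ := hK.exists_bound_of_continuousOn hf.continuousOn
  refine ⟨max C 0, le_max_right _ _, fun u => ?_⟩
  have hC0 : 0 ≤ max C 0 := le_max_right _ _
  rcases eq_or_ne u 0 with rfl | hu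
  · rw [mul_zero, abs_zero]
    positivity
  have hu' : 0 < |u| := abs_pos.2 hu
  rw [abs_mul]
  by_cases hmem : u ∈ K
  · have h2 : |f u| ≤ max C 0 := (hC u hmem).trans (le_max_left _ _)
    have h3 := mul_le_mul_of_nonneg_right h2 hu'.le
    have h4 : 0 ≤ ε * |u| ^ s := by positivity
    linarith
  · have h2 : |f u / |u| ^ (s - 1)| < ε := hKu hmem
    have hpos : 0 < |u| ^ (s - 1) := Real.rpow_pos_of_pos hu' _
    rw [abs_div, abs_of_pos hpos, div_lt_iff₀ hpos] at h2
    have h3 := mul_le_mul_of_nonneg_right h2.le hu'.le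
    have h4 : |u| ^ (s - 1) * |u| = |u| ^ s := by
      rw [Real.rpow_sub_one hu'.ne', div_mul_cancel₀ _ hu'.ne']
    rw [mul_assoc, h4] at h3
    have h5 : 0 ≤ max C 0 * |u| := by positivity
    linarith

/-- if `f(u) = o(|u|^{p*-1})` as `|u| → ∞`, `Ω` has finite measure,
`(vₙ)` is bounded in `L^{p*}(Ω)` and `vₙ → 0` in `L¹(Ω)`, then `∫_Ω f(vₙ) vₙ → 0`. -/
theorem perturbation_term_vanishes (N : ℕ) (hN : 3 ≤ N) (p ps : ℝ) (hp1 : 1 < p) (hpN : p < N)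
    (hps : ps = N * p / (N - p))
    (Ω : Set (EuclideanSpace ℝ (Fin N))) (hΩ : MeasurableSet Ω) (hΩfin : volume Ω < ⊤)
    (f : ℝ → ℝ) (hf : Continuous f)
    (hgrowth : Tendsto (fun u : ℝ => f u / |u| ^ (ps - 1)) (cocompact ℝ) (nhds 0))
    (v : ℕ → EuclideanSpace ℝ (Fin N) → ℝ) (hmeas : ∀ n, Measurable (v n))
    (hbound : ∃ M : ℝ, ∀ n, (∫⁻ x in Ω, ENNReal.ofReal (|v n x| ^ ps)) ≤ ENNReal.ofReal M)
    (hL1 : Tendsto (fun n => ∫⁻ x in Ω, ENNReal.ofReal |v n x|) atTop (nhds 0)) :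
    Tendsto (fun n => ∫ x in Ω, f (v n x) * v n x) atTop (nhds 0) := by
  obtain ⟨M, hM⟩ := hbound
  rw [Metric.tendsto_atTop']
  intro δ hδ
  -- With this `ε` the critical term contributes less than `δ / 2`.
  set ε : ℝ := δ / (2 * (|M| + 1)) with hεdef
  have hε : 0 < ε := by positivity
  have hεM : ε * |M| < δ / 2 := by
    have : ε * (|M| + 1) = δ / 2 := by rw [hεdef]; field_simp
    nlinarith
  obtain ⟨C, hC0, hC⟩ := abs_mul_self_le hf hgrowth hε
  have hlim : Tendsto (fun n => ENNReal.ofReal C * ∫⁻ x in Ω, ENNReal.ofReal |v n x|) atTop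
      (nhds 0) := by
    simpa using ENNReal.Tendsto.const_mul hL1 (Or.inr ENNReal.ofReal_ne_top)
  have hev := hlim.eventually_lt_const (ENNReal.ofReal_pos.2 (half_pos hδ))
  obtain ⟨n₀, hn₀⟩ := eventually_atTop.1 hev
  refine ⟨n₀, fun n hn => ?_⟩
  have hbd : ‖∫ x in Ω, f (v n x) * v n x‖ₑ < ENNReal.ofReal δ := by
    calc ‖∫ x in Ω, f (v n x) * v n x‖ₑ
        ≤ ∫⁻ x in Ω, ‖f (v n x) * v n x‖ₑ := enorm_integral_le_lintegral_enorm _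
      _ ≤ ∫⁻ x in Ω, (ENNReal.ofReal ε * ENNReal.ofReal (|v n x| ^ ps)
            + ENNReal.ofReal C * ENNReal.ofReal |v n x|) := by
          refine lintegral_mono fun x => ?_
          rw [Real.enorm_eq_ofReal_abs, ← ENNReal.ofReal_mul hε.le, ← ENNReal.ofReal_mul hC0,
            ← ENNReal.ofReal_add (by positivity) (by positivity)]
          exact ENNReal.ofReal_le_ofReal (hC _)
      _ = ENNReal.ofReal ε * (∫⁻ x in Ω, ENNReal.ofReal (|v n x| ^ ps))
            + ENNReal.ofReal C * ∫⁻ x in Ω, ENNReal.ofReal |v n x| := by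
          have hm := hmeas n
          rw [lintegral_add_right _ (by fun_prop), lintegral_const_mul' _ _ ENNReal.ofReal_ne_top,
            lintegral_const_mul' _ _ ENNReal.ofReal_ne_top]
      _ < ENNReal.ofReal (δ / 2) + ENNReal.ofReal (δ / 2) := by
          refine ENNReal.add_lt_add ?_ (hn₀ n hn.le)
          calc _ ≤ ENNReal.ofReal ε * ENNReal.ofReal |M| := by
                gcongr
                exact (hM n).trans (ENNReal.ofReal_le_ofReal (le_abs_self M))
            _ = ENNReal.ofReal (ε * |M|) := (ENNReal.ofReal_mul hε.le).symm
            _ < _ := (ENNReal.ofReal_lt_ofReal_iff (half_pos hδ)).2 hεM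
      _ = ENNReal.ofReal δ := by
          rw [← ENNReal.ofReal_add (half_pos hδ).le (half_pos hδ).le, add_halves]
  rw [Real.enorm_eq_ofReal_abs, ENNReal.ofReal_lt_ofReal_iff hδ] at hbd
  simpa [Real.dist_eq] using hbd
end

section
/- Let N ≥ 3, 1 < p < N, p* = Np/(N−p), and let Ω ⊂ ℝᴺ be a measurable set of finite Lebesgue measure. Let f : ℝ → ℝ be continuous with f(u) = o(|u|^{p*−1}) as |u| → ∞, and let F(u) = ∫₀ᵘ f(s) ds. Let (vₙ) be a sequence of measurable functions on Ω such that sup_n ∫_Ω |vₙ|^{p*} dx < ∞ and ∫_Ω |vₙ| dx → 0. Then ∫_Ω F(vₙ(x)) dx → 0 as n → ∞. -/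
/-!
Subcritical growth gives, for each `ε > 0`, a constant `C` with `|f s| ≤ ε |s|^(p* - 1) + C` for all
`s` (`growth_bound`). Integrating, `|F u| ≤ ε |u|^p* + C |u|` (`primitive_bound`), so
`∫_Ω |F(vₙ)| ≤ ε M + C ‖vₙ‖_{L¹}`. The second term tends to `0` for fixed `ε`, and `ε` is arbitrary.
-/

open Filter MeasureTheory intervalIntegral

/-- The constant comes from the maximum of `|f|` on the compact set outside which
`|f s| ≤ ε |s|^q` holds. -/
lemma growth_bound {f : ℝ → ℝ} (hf : Continuous f) {q : ℝ}
    (hgrowth : Tendsto (fun u : ℝ => f u / |u| ^ q) (cocompact ℝ) (nhds 0))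
    {ε : ℝ} (hε : 0 < ε) : ∃ C : ℝ, 0 ≤ C ∧ ∀ s, |f s| ≤ ε * |s| ^ q + C := by
  have h := (Metric.tendsto_nhds.1 hgrowth) ε hε
  obtain ⟨K, hK, hKs⟩ := mem_cocompact.1 h
  -- Including `0` in the compact set keeps the division by `|s|^q` meaningful outside it.
  obtain ⟨C, hC⟩ := (hK.insert 0).exists_bound_of_continuousOn hf.continuousOn
  refine ⟨C, (norm_nonneg _).trans (hC 0 (by simp)), fun s => ?_⟩
  have hC0 : 0 ≤ C := (norm_nonneg _).trans (hC 0 (by simp))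
  by_cases hs : s ∈ insert 0 K
  · have h1 := hC s hs
    rw [Real.norm_eq_abs] at h1
    have : 0 ≤ ε * |s| ^ q := by positivity
    linarith
  · have hs0 : s ≠ 0 := fun h => hs (by simp [h])
    have h1 : dist (f s / |s| ^ q) 0 < ε := hKs (fun h => hs (Set.mem_insert_of_mem _ h))
    have hpos : 0 < |s| ^ q := Real.rpow_pos_of_pos (abs_pos.2 hs0) _
    rw [Real.dist_eq, sub_zero, abs_div, abs_of_pos hpos, div_lt_iff₀ hpos] at h1
    linarith

lemma primitive_bound {f : ℝ → ℝ} {r ε C : ℝ} (hr : 1 < r) (hε : 0 < ε)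
    (h : ∀ s, |f s| ≤ ε * |s| ^ (r - 1) + C) (u : ℝ) :
    |∫ s in (0:ℝ)..u, f s| ≤ ε * |u| ^ r + C * |u| := by
  have h1 : ‖∫ s in (0:ℝ)..u, f s‖ ≤ (ε * |u| ^ (r - 1) + C) * |u - 0| := by
    refine intervalIntegral.norm_integral_le_of_norm_le_const fun s hs => (h s).trans ?_
    have hsu : |s| ≤ |u| := by
      simpa using Set.abs_sub_left_of_mem_uIcc (Set.uIoc_subset_uIcc hs)
    have : |s| ^ (r - 1) ≤ |u| ^ (r - 1) :=
      Real.rpow_le_rpow (abs_nonneg _) hsu (by linarith)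
    gcongr
  have h2 : |u| ^ (r - 1) * |u| = |u| ^ r := by
    have h3 := Real.rpow_add_one' (abs_nonneg u) (y := r - 1) (by linarith)
    rw [← h3, sub_add_cancel]
  rw [Real.norm_eq_abs, sub_zero] at h1
  rw [← h2]
  linarith

/-- if `f(u) = o(|u|^{p*-1})` as `|u| → ∞`, `F(u) = ∫₀ᵘ f(s) ds`, `Ω` has
finite measure, `(vₙ)` is bounded in `L^{p*}(Ω)` and `vₙ → 0` in `L¹(Ω)`, then `∫_Ω F(vₙ) → 0`. -/
theorem primitive_term_vanishes (N : ℕ) (hN : 3 ≤ N) (p ps : ℝ) (hp1 : 1 < p) (hpN : p < N)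
    (hps : ps = N * p / (N - p))
    (Ω : Set (EuclideanSpace ℝ (Fin N))) (hΩ : MeasurableSet Ω) (hΩfin : volume Ω < ⊤)
    (f : ℝ → ℝ) (hf : Continuous f)
    (hgrowth : Tendsto (fun u : ℝ => f u / |u| ^ (ps - 1)) (cocompact ℝ) (nhds 0))
    (F : ℝ → ℝ) (hF : ∀ u : ℝ, F u = ∫ s in (0:ℝ)..u, f s)
    (v : ℕ → EuclideanSpace ℝ (Fin N) → ℝ) (hmeas : ∀ n, Measurable (v n))
    (hbound : ∃ M : ℝ, ∀ n, (∫⁻ x in Ω, ENNReal.ofReal (|v n x| ^ ps)) ≤ ENNReal.ofReal M)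
    (hL1 : Tendsto (fun n => ∫⁻ x in Ω, ENNReal.ofReal |v n x|) atTop (nhds 0)) :
    Tendsto (fun n => ∫ x in Ω, F (v n x)) atTop (nhds 0) := by
  have hr : 1 < ps := by
    rw [hps, lt_div_iff₀ (by linarith)]
    nlinarith
  obtain ⟨M, hM⟩ := hbound
  rw [Metric.tendsto_nhds]
  intro η hη
  -- `δ` makes the critical term `δ * M` at most `η / 4`.
  set δ : ℝ := η / (4 * (|M| + 1)) with hδ
  have hδ0 : 0 < δ := by positivity
  have hδM : δ * M ≤ η / 4 := by
    have h1 : δ * (|M| + 1) = η / 4 := by rw [hδ]; field_simp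
    nlinarith [le_abs_self M]
  obtain ⟨C, hC0, hC⟩ := growth_bound hf hgrowth hδ0
  have hlim : Tendsto (fun n => ENNReal.ofReal C * ∫⁻ x in Ω, ENNReal.ofReal |v n x|)
      atTop (nhds 0) := by
    simpa using ENNReal.Tendsto.const_mul hL1 (Or.inr ENNReal.ofReal_ne_top)
  filter_upwards [ENNReal.tendsto_nhds_zero.1 hlim (ENNReal.ofReal (η / 4))
    (ENNReal.ofReal_pos.2 (by positivity))] with n hn
  have hv := hmeas n
  have hpt : ∀ x, ‖F (v n x)‖ₑ ≤ ENNReal.ofReal δ * ENNReal.ofReal (|v n x| ^ ps)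
      + ENNReal.ofReal C * ENNReal.ofReal |v n x| := fun x => by
    rw [← ENNReal.ofReal_mul hδ0.le, ← ENNReal.ofReal_mul hC0,
      ← ENNReal.ofReal_add (by positivity) (by positivity), Real.enorm_eq_ofReal_abs, hF]
    exact ENNReal.ofReal_le_ofReal (primitive_bound hr hδ0 hC _)
  have hle : ‖∫ x in Ω, F (v n x)‖ₑ ≤ ENNReal.ofReal (η / 2) := by
    calc ‖∫ x in Ω, F (v n x)‖ₑ ≤ ∫⁻ x in Ω, ‖F (v n x)‖ₑ := enorm_integral_le_lintegral_enorm _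
      _ ≤ ∫⁻ x in Ω, (ENNReal.ofReal δ * ENNReal.ofReal (|v n x| ^ ps)
          + ENNReal.ofReal C * ENNReal.ofReal |v n x|) := lintegral_mono hpt
      _ = ENNReal.ofReal δ * (∫⁻ x in Ω, ENNReal.ofReal (|v n x| ^ ps))
          + ENNReal.ofReal C * ∫⁻ x in Ω, ENNReal.ofReal |v n x| := by
        rw [lintegral_add_right _ (by fun_prop), lintegral_const_mul _ (by fun_prop),
          lintegral_const_mul _ (by fun_prop)]
      _ ≤ ENNReal.ofReal (η / 4) + ENNReal.ofReal (η / 4) := by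
        refine add_le_add ((mul_le_mul_right (hM n) _).trans ?_) hn
        rw [← ENNReal.ofReal_mul hδ0.le]
        exact ENNReal.ofReal_le_ofReal hδM
      _ = ENNReal.ofReal (η / 2) := by
        rw [← ENNReal.ofReal_add (by positivity) (by positivity)]
        congr 1
        ring
  rw [Real.enorm_eq_ofReal_abs, ENNReal.ofReal_le_ofReal_iff (by positivity)] at hle
  rw [Real.dist_eq, sub_zero]
  linarith
end

section
/- Let N ≥ 3, 1 < p < N, p* = Np/(N−p), and let Ω ⊂ ℝᴺ be a nonempty bounded open set. Let α > 0, β > 0 satisfy α + β + 2 = p*. Define the best Sobolev constant S_p := inf { (∫_Ω |∇u|^p dx) / (∫_Ω |u|^{p*} dx)^{p/p*} : u ∈ C_c^∞(Ω), u ≢ 0 }. Then the infimum, over all pairs (u,v) of smooth compactly supported functions on Ω with ∫_Ω |u|^{α+1}|v|^{β+1} dx > 0, of the quantity (p/(N−p)) · [ (∫_Ω |∇u|^p dx)^{α+1} (∫_Ω |∇v|^p dx)^{β+1} / (∫_Ω |u|^{α+1}|v|^{β+1} dx)^p ]^{1/(p*−p)} equals (p/(N−p)) · S_p^{N/p}.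 -/
/-!
Write `A, B` for the `p`-Dirichlet integrals of `u, v` and `I` for `∫ |u|^(α+1) |v|^(β+1)`. Hölder's
inequality with exponents `ps/(α+1)` and `ps/(β+1)` (conjugate because `α + β + 2 = ps`) bounds
`I` by `‖u‖_ps^(α+1) ‖v‖_ps^(β+1)`, so `A^(α+1) B^(β+1) / I^p` is at least the product of the two
Sobolev quotients raised to `α+1` and `β+1`, hence at least `Sp^ps`. As `ps/(ps-p) = N/p`, every
value of the system quotient is at least `(p/(N-p)) Sp^(N/p)`. Conversely the diagonal choice
`u = v` produces exactly `(p/(N-p)) c^(N/p)` for each Sobolev quotient `c`, and continuity of this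
expression in `c` passes the bound to the infimum.
-/

open MeasureTheory

/-- Hölder's inequality for `|u|^a |v|^b` with `a + b = s`, on a set `Ω`, for continuous compactly
supported functions. -/
lemma holder_test_functions {E : Type*} [TopologicalSpace E] [MeasurableSpace E] [BorelSpace E]
    (μ : Measure E) [IsFiniteMeasureOnCompacts μ] (Ω : Set E) {a b s : ℝ} (ha : 0 < a) (hb : 0 < b)
    (hs : a + b = s) {u v : E → ℝ} (hu : Continuous u) (hv : Continuous v)
    (hcu : HasCompactSupport u) (hcv : HasCompactSupport v) :
    ∫ x in Ω, |u x| ^ a * |v x| ^ b ∂μ ≤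
      (∫ x in Ω, |u x| ^ s ∂μ) ^ (a / s) * (∫ x in Ω, |v x| ^ s ∂μ) ^ (b / s) := by
  have hs0 : 0 < s := by linarith
  have hpq : (s / a).HolderConjugate (s / b) := by
    rw [Real.holderConjugate_iff]
    constructor
    · rw [lt_div_iff₀ ha]; linarith
    · field_simp; linarith
  have key : ∀ {w : E → ℝ} {c : ℝ}, 0 < c → Continuous w → HasCompactSupport w →
      MemLp (fun x => |w x| ^ c) (ENNReal.ofReal (s / c)) (μ.restrict Ω) := by
    intro w c hc hw hcw
    refine MemLp.restrict Ω (Continuous.memLp_of_hasCompactSupport ?_ ?_)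
    · exact hw.abs.rpow_const fun _ => Or.inr hc.le
    · exact hcw.comp_left (g := fun t : ℝ => |t| ^ c) (by simp [Real.zero_rpow hc.ne'])
  have h := integral_mul_le_Lp_mul_Lq_of_nonneg hpq (μ := μ.restrict Ω)
    (f := fun x => |u x| ^ a) (g := fun x => |v x| ^ b)
    (Filter.Eventually.of_forall fun x => by positivity)
    (Filter.Eventually.of_forall fun x => by positivity) (key ha hu hcu) (key hb hv hcv)
  have e : ∀ {c : ℝ}, 0 < c → ∀ t : ℝ, (|t| ^ c) ^ (s / c) = |t| ^ s := by
    intro c hc t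
    rw [← Real.rpow_mul (abs_nonneg t), mul_div_cancel₀ _ hc.ne']
  simpa only [e ha, e hb, one_div_div] using h

lemma integral_abs_rpow_pos_of_ne_zero {N : ℕ} {Ω : Set (EuclideanSpace ℝ (Fin N))} {s : ℝ}
    (hs : 0 < s) {u : EuclideanSpace ℝ (Fin N) → ℝ} (hu : Continuous u)
    (hcu : HasCompactSupport u) (hsu : tsupport u ⊆ Ω) (h0 : u ≠ 0) :
    0 < ∫ x in Ω, |u x| ^ s := by
  rw [setIntegral_eq_integral_of_forall_compl_eq_zero]
  · obtain ⟨x, hx⟩ := Function.ne_iff.mp h0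
    refine Continuous.integral_pos_of_hasCompactSupport_nonneg_nonzero (x := x)
      (hu.abs.rpow_const fun _ => Or.inr hs.le)
      (hcu.comp_left (g := fun t : ℝ => |t| ^ s) (by simp [Real.zero_rpow hs.ne']))
      (fun x => by positivity) ?_
    exact (Real.rpow_pos_of_pos (abs_pos.mpr hx) s).ne'
  · intro x hx
    rw [image_eq_zero_of_notMem_tsupport fun h => hx (hsu h), abs_zero, Real.zero_rpow hs.ne']

/-- Proposition, case `p = q`: the infimum of the Nehari level of the
homogeneous system functional over pairs of test functions equals `(p/(N−p)) S_p^{N/p}`,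
where `S_p` is the best Sobolev constant of `W^{1,p}_0(Ω) ⊂ L^{p*}(Ω)`. -/
theorem nehari_infimum_system_eq (N : ℕ) (hN : 3 ≤ N) (p ps α β : ℝ)
    (hp1 : 1 < p) (hpN : p < N) (hps : ps = N * p / (N - p))
    (hα : 0 < α) (hβ : 0 < β) (hcrit : α + β + 2 = ps)
    (Ω : Set (EuclideanSpace ℝ (Fin N))) (hΩo : IsOpen Ω) (hΩb : Bornology.IsBounded Ω)
    (hΩne : Ω.Nonempty)
    (Sp : ℝ)
    (hSp : Sp = sInf {c : ℝ | ∃ u : EuclideanSpace ℝ (Fin N) → ℝ,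
      ContDiff ℝ (⊤ : ℕ∞) u ∧ HasCompactSupport u ∧ tsupport u ⊆ Ω ∧ u ≠ 0 ∧
      c = (∫ x in Ω, ‖fderiv ℝ u x‖ ^ p) / (∫ x in Ω, |u x| ^ ps) ^ (p / ps)}) :
    sInf {c : ℝ | ∃ u v : EuclideanSpace ℝ (Fin N) → ℝ,
      ContDiff ℝ (⊤ : ℕ∞) u ∧ HasCompactSupport u ∧ tsupport u ⊆ Ω ∧
      ContDiff ℝ (⊤ : ℕ∞) v ∧ HasCompactSupport v ∧ tsupport v ⊆ Ω ∧
      0 < (∫ x in Ω, |u x| ^ (α + 1) * |v x| ^ (β + 1)) ∧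
      c = (p / (N - p)) * ((∫ x in Ω, ‖fderiv ℝ u x‖ ^ p) ^ (α + 1) *
            (∫ x in Ω, ‖fderiv ℝ v x‖ ^ p) ^ (β + 1) /
            (∫ x in Ω, |u x| ^ (α + 1) * |v x| ^ (β + 1)) ^ p) ^ (1 / (ps - p))}
      = (p / (N - p)) * Sp ^ ((N : ℝ) / p) := by
  have hNp : 0 < (N : ℝ) - p := by linarith
  have hp0 : 0 < p := by linarith
  have hN0 : 0 < (N : ℝ) := by linarith
  have hps0 : 0 < ps := by linarith
  have hK : 0 < p / ((N : ℝ) - p) := by positivity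
  have hdiff : ps - p = p * p / (N - p) := by rw [hps]; field_simp; ring
  have hd0 : 0 < ps - p := by rw [hdiff]; positivity
  have hexp : ps * (1 / (ps - p)) = N / p := by rw [hdiff, hps]; field_simp
  have hNp' : 0 < (N : ℝ) / p := by positivity
  have ha : 0 < α + 1 := by linarith
  have hb : 0 < β + 1 := by linarith
  have hab : (α + 1) + (β + 1) = ps := by linarith
  set S := {c : ℝ | ∃ u : EuclideanSpace ℝ (Fin N) → ℝ,
      ContDiff ℝ (⊤ : ℕ∞) u ∧ HasCompactSupport u ∧ tsupport u ⊆ Ω ∧ u ≠ 0 ∧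
      c = (∫ x in Ω, ‖fderiv ℝ u x‖ ^ p) / (∫ x in Ω, |u x| ^ ps) ^ (p / ps)} with hS
  set T := {c : ℝ | ∃ u v : EuclideanSpace ℝ (Fin N) → ℝ,
      ContDiff ℝ (⊤ : ℕ∞) u ∧ HasCompactSupport u ∧ tsupport u ⊆ Ω ∧
      ContDiff ℝ (⊤ : ℕ∞) v ∧ HasCompactSupport v ∧ tsupport v ⊆ Ω ∧
      0 < (∫ x in Ω, |u x| ^ (α + 1) * |v x| ^ (β + 1)) ∧
      c = (p / (N - p)) * ((∫ x in Ω, ‖fderiv ℝ u x‖ ^ p) ^ (α + 1) *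
            (∫ x in Ω, ‖fderiv ℝ v x‖ ^ p) ^ (β + 1) /
            (∫ x in Ω, |u x| ^ (α + 1) * |v x| ^ (β + 1)) ^ p) ^ (1 / (ps - p))} with hT
  have hgrad : ∀ u : EuclideanSpace ℝ (Fin N) → ℝ, 0 ≤ ∫ x in Ω, ‖fderiv ℝ u x‖ ^ p :=
    fun u => integral_nonneg fun x => by positivity
  have habs : ∀ u : EuclideanSpace ℝ (Fin N) → ℝ, 0 ≤ ∫ x in Ω, |u x| ^ ps :=
    fun u => integral_nonneg fun x => by positivity
  have hS0 : ∀ c ∈ S, 0 ≤ c := by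
    rintro c ⟨u, -, -, -, -, rfl⟩
    exact div_nonneg (hgrad u) (Real.rpow_nonneg (habs u) _)
  have hSbdd : BddBelow S := ⟨0, hS0⟩
  have hSp0 : 0 ≤ Sp := hSp ▸ Real.sInf_nonneg hS0
  have hdiag : ∀ c ∈ S, p / ((N : ℝ) - p) * c ^ ((N : ℝ) / p) ∈ T := by
    rintro c ⟨u, hu, hcu, hsu, hu0, rfl⟩
    have hint : ∀ x, |u x| ^ (α + 1) * |u x| ^ (β + 1) = |u x| ^ ps := fun x => by
      rw [← Real.rpow_add_of_nonneg (abs_nonneg _) ha.le hb.le, hab]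
    have hpos := integral_abs_rpow_pos_of_ne_zero hps0 hu.continuous hcu hsu hu0
    refine ⟨u, u, hu, hcu, hsu, hu, hcu, hsu, ?_, ?_⟩
    · simpa only [hint] using hpos
    · simp only [hint]
      rw [← Real.rpow_add_of_nonneg (hgrad u) ha.le hb.le, hab, ← hexp,
        Real.rpow_mul (div_nonneg (hgrad u) (Real.rpow_nonneg hpos.le _)),
        Real.div_rpow (hgrad u) (Real.rpow_nonneg hpos.le _), ← Real.rpow_mul hpos.le,
        div_mul_cancel₀ _ hps0.ne']
  -- A pair with positive coupling integral has two nonzero components.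
  have hne : ∀ u v : EuclideanSpace ℝ (Fin N) → ℝ,
      0 < (∫ x in Ω, |u x| ^ (α + 1) * |v x| ^ (β + 1)) → u ≠ 0 ∧ v ≠ 0 := by
    intro u v h
    constructor <;> rintro rfl <;> simp [Real.zero_rpow ha.ne', Real.zero_rpow hb.ne'] at h
  have hlow : ∀ t ∈ T, p / ((N : ℝ) - p) * Sp ^ ((N : ℝ) / p) ≤ t := by
    rintro t ⟨u, v, hu, hcu, hsu, hv, hcv, hsv, hI, rfl⟩
    obtain ⟨hu0, hv0⟩ := hne u v hI
    have hH := holder_test_functions volume Ω ha hb hab hu.continuous hv.continuous hcu hcv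
    have hup := integral_abs_rpow_pos_of_ne_zero hps0 hu.continuous hcu hsu hu0
    have hvp := integral_abs_rpow_pos_of_ne_zero hps0 hv.continuous hcv hsv hv0
    have hSu : Sp ≤ (∫ x in Ω, ‖fderiv ℝ u x‖ ^ p) / (∫ x in Ω, |u x| ^ ps) ^ (p / ps) :=
      hSp ▸ csInf_le hSbdd ⟨u, hu, hcu, hsu, hu0, rfl⟩
    have hSv : Sp ≤ (∫ x in Ω, ‖fderiv ℝ v x‖ ^ p) / (∫ x in Ω, |v x| ^ ps) ^ (p / ps) :=
      hSp ▸ csInf_le hSbdd ⟨v, hv, hcv, hsv, hv0, rfl⟩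
    have hA := hgrad u
    have hB := hgrad v
    generalize (∫ x in Ω, |u x| ^ (α + 1) * |v x| ^ (β + 1)) = I at *
    generalize (∫ x in Ω, ‖fderiv ℝ u x‖ ^ p) = A at *
    generalize (∫ x in Ω, ‖fderiv ℝ v x‖ ^ p) = B at *
    generalize (∫ x in Ω, |u x| ^ ps) = U at *
    generalize (∫ x in Ω, |v x| ^ ps) = V at *
    have hIp : I ^ p ≤ (U ^ (p / ps)) ^ (α + 1) * (V ^ (p / ps)) ^ (β + 1) := by
      calc I ^ p ≤ (U ^ ((α + 1) / ps) * V ^ ((β + 1) / ps)) ^ p :=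
            Real.rpow_le_rpow hI.le hH hp0.le
        _ = _ := by
            rw [Real.mul_rpow (by positivity) (by positivity), ← Real.rpow_mul hup.le,
              ← Real.rpow_mul hvp.le, ← Real.rpow_mul hup.le, ← Real.rpow_mul hvp.le]
            congr 2 <;> ring
    have hmain : Sp ^ ps ≤ A ^ (α + 1) * B ^ (β + 1) / I ^ p := by
      calc Sp ^ ps = Sp ^ (α + 1) * Sp ^ (β + 1) := by
            rw [← Real.rpow_add_of_nonneg hSp0 ha.le hb.le, hab]
        _ ≤ (A / U ^ (p / ps)) ^ (α + 1) * (B / V ^ (p / ps)) ^ (β + 1) := by gcongr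
        _ = A ^ (α + 1) * B ^ (β + 1) / ((U ^ (p / ps)) ^ (α + 1) * (V ^ (p / ps)) ^ (β + 1)) := by
            rw [Real.div_rpow hA (by positivity), Real.div_rpow hB (by positivity), div_mul_div_comm]
        _ ≤ A ^ (α + 1) * B ^ (β + 1) / I ^ p := by gcongr
    rw [← hexp, Real.rpow_mul hSp0]
    have : 0 ≤ 1 / (ps - p) := by positivity
    gcongr
  rcases S.eq_empty_or_nonempty with hSe | hSne
  · -- Without Sobolev quotients there are no admissible pairs, and both infima are `sInf ∅ = 0`.
    have hTe : T = ∅ := by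
      refine Set.eq_empty_of_forall_notMem ?_
      rintro t ⟨u, v, hu, hcu, hsu, -, -, -, hI, -⟩
      have : _ ∈ S := ⟨u, hu, hcu, hsu, (hne u v hI).1, rfl⟩
      rw [hSe] at this
      exact this
    rw [hTe, hSp, hSe, Real.sInf_empty, Real.zero_rpow hNp'.ne', mul_zero]
  · apply le_antisymm
    · have hTbdd : BddBelow T := ⟨_, hlow⟩
      have hcl : IsClosed {c : ℝ | sInf T ≤ p / ((N : ℝ) - p) * c ^ ((N : ℝ) / p)} :=
        isClosed_le continuous_const
          (continuous_const.mul (Real.continuous_rpow_const hNp'.le))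
      have hmem : Sp ∈ closure S := hSp ▸ csInf_mem_closure hSne hSbdd
      exact closure_minimal (fun c hc => csInf_le hTbdd (hdiag c hc)) hcl hmem
    · obtain ⟨c, hc⟩ := hSne
      exact le_csInf ⟨_, hdiag c hc⟩ hlow
end

section
/- Let N ≥ 3, 1 < p < N, and for ε > 0 define Φ_ε : ℝᴺ → ℝ by Φ_ε(x) = C_N ε^{(N−p)/p²} (ε + |x|^{p/(p−1)})^{(p−N)/p}, where C_N = (N((N−p)/(p−1))^{p−1})^{(N−p)/p²}. Then x ↦ |∇Φ_ε(x)|^p is integrable on ℝᴺ for every ε > 0, and for every bounded continuous function g : ℝᴺ → ℝ one has ∫_{ℝᴺ} g(x) |∇Φ_ε(x)|^p dx → g(0) · ∫_{ℝᴺ} |∇Φ₁(x)|^p dx as ε → 0⁺. -/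
open Filter MeasureTheory

/-!
The family is a dilation family. With `q = p / (p - 1)` and `r = ε ^ (1 / q)` one has
`Φ_ε x = r ^ (-(N - p) / p) * Φ₁ (r⁻¹ • x)`, hence `|∇Φ_ε x| ^ p = r ^ (-N) * f (r⁻¹ • x)` with
`f = |∇Φ₁| ^ p` (`talenti_density_scaling`). A direct computation of the gradient gives
`|∇Φ₁ x| ≤ K * (1 + ‖x‖ ^ q) ^ ((1 - N) / p)` (`norm_fderiv_profile_le`), so `f` is bounded by a
multiple of `(1 + ‖x‖) ^ (-q * (N - 1))`, which is integrable because `q * (N - 1) > N` is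
equivalent to `p < N`. Integrability of every density follows by scaling. The change of variables
`x = r • y` turns the integral against `g` into `∫ g (r • y) * f y`, and dominated convergence, with
dominating function a multiple of `f`, gives the limit `g 0 * ∫ f`.
-/

/-- The factor `‖x‖ ^ (q - 1)` in the gradient is absorbed as `(1 + ‖x‖ ^ q) ^ ((q - 1) / q)`. -/
lemma norm_fderiv_profile_le {E : Type*} [NormedAddCommGroup E] [InnerProductSpace ℝ E]
    {q : ℝ} (hq : 1 < q) (a c : ℝ) (x : E) :
    ‖fderiv ℝ (fun x : E => c * (1 + ‖x‖ ^ q) ^ a) x‖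
      ≤ |c| * |a| * q * (1 + ‖x‖ ^ q) ^ (a - 1 / q) := by
  have ht : 0 ≤ ‖x‖ ^ q := by positivity
  have hpos : 0 < 1 + ‖x‖ ^ q := by positivity
  have hd := (((differentiable_norm_rpow hq x).hasFDerivAt.const_add 1).rpow_const
    (p := a) (Or.inl hpos.ne')).const_mul c
  rw [hd.fderiv, norm_smul, norm_smul, norm_fderiv_norm_id_rpow x hq, norm_mul, Real.norm_eq_abs,
    Real.norm_eq_abs, Real.norm_eq_abs, abs_of_nonneg (Real.rpow_nonneg hpos.le _)]
  have h1 : ‖x‖ ^ (q - 1) ≤ (1 + ‖x‖ ^ q) ^ ((q - 1) / q) := by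
    calc ‖x‖ ^ (q - 1) = (‖x‖ ^ q) ^ ((q - 1) / q) := by
          rw [← Real.rpow_mul (norm_nonneg x)]
          congr 1
          field_simp
      _ ≤ _ := Real.rpow_le_rpow ht (by linarith) (div_nonneg (by linarith) (by linarith))
  have h2 : (1 + ‖x‖ ^ q) ^ (a - 1 / q)
      = (1 + ‖x‖ ^ q) ^ (a - 1) * (1 + ‖x‖ ^ q) ^ ((q - 1) / q) := by
    rw [← Real.rpow_add hpos]
    congr 1
    field_simp
    ring
  rw [h2]
  calc |c| * (|a| * (1 + ‖x‖ ^ q) ^ (a - 1) * (q * ‖x‖ ^ (q - 1)))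
      = |c| * |a| * q * ((1 + ‖x‖ ^ q) ^ (a - 1) * ‖x‖ ^ (q - 1)) := by ring
    _ ≤ _ := by gcongr

lemma one_add_rpow_neg_le {q b t : ℝ} (hq : 1 < q) (hb : 0 ≤ b) (ht : 0 ≤ t) :
    (1 + t ^ q) ^ (-b) ≤ 2 ^ (q * b) * (1 + t) ^ (-(q * b)) := by
  have hq0 : 0 < q := by linarith
  have htq : 0 ≤ t ^ q := Real.rpow_nonneg ht q
  have hu : 0 < 1 + t ^ q := by positivity
  have h1 : 1 + t ≤ 2 * (1 + t ^ q) ^ (1 / q) := by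
    have e1 : t ≤ (1 + t ^ q) ^ (1 / q) := by
      calc t = (t ^ q) ^ (1 / q) := by
            rw [← Real.rpow_mul ht, mul_one_div_cancel hq0.ne', Real.rpow_one]
        _ ≤ _ := Real.rpow_le_rpow htq (by linarith) (by positivity)
    have e2 : 1 ≤ (1 + t ^ q) ^ (1 / q) := Real.one_le_rpow (by linarith) (by positivity)
    linarith
  have h2 : (1 + t) ^ (q * b) ≤ 2 ^ (q * b) * (1 + t ^ q) ^ b := by
    calc (1 + t) ^ (q * b) ≤ (2 * (1 + t ^ q) ^ (1 / q)) ^ (q * b) :=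
          Real.rpow_le_rpow (by positivity) h1 (by positivity)
      _ = 2 ^ (q * b) * (1 + t ^ q) ^ b := by
          rw [Real.mul_rpow (by norm_num) (by positivity), ← Real.rpow_mul hu.le]
          congr 2
          field_simp
  rw [Real.rpow_neg hu.le, Real.rpow_neg (by positivity), ← div_eq_mul_inv,
    le_div_iff₀ (by positivity), inv_mul_le_iff₀ (by positivity)]
  linarith

/-- Integrability of the `p`-energy density of the profile `c * (1 + ‖x‖ ^ q) ^ ((p - N) / p)`,
where `q = p / (p - 1)`. -/
lemma integrable_profile_density (N : ℕ) (p c : ℝ) (hp1 : 1 < p) (hpN : p < N) :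
    Integrable (fun x : EuclideanSpace ℝ (Fin N) =>
      ‖fderiv ℝ (fun x : EuclideanSpace ℝ (Fin N) =>
        c * (1 + ‖x‖ ^ (p / (p - 1))) ^ ((p - N) / p)) x‖ ^ p) volume := by
  have hp' : 0 < p - 1 := by linarith
  have hp0 : 0 < p := by linarith
  have hq : 1 < p / (p - 1) := by rw [lt_div_iff₀ hp']; linarith
  set q := p / (p - 1) with hqdef
  have hdim : (Module.finrank ℝ (EuclideanSpace ℝ (Fin N)) : ℝ) < q * (N - 1) := by
    rw [finrank_euclideanSpace_fin, hqdef, div_mul_eq_mul_div, lt_div_iff₀ hp']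
    nlinarith
  set K := |c| * |(p - N) / p| * q with hK
  have hK0 : 0 ≤ K := by positivity
  refine ((integrable_one_add_norm (μ := volume) hdim).const_mul
    (K ^ p * 2 ^ (q * (N - 1 : ℝ)))).mono' ?_ ?_
  · exact ((measurable_fderiv ℝ _).norm.pow_const p).aestronglyMeasurable
  · refine Eventually.of_forall fun x => ?_
    have hu : 0 < 1 + ‖x‖ ^ q := by positivity
    rw [Real.norm_eq_abs, abs_of_nonneg (by positivity)]
    calc _ ≤ (K * (1 + ‖x‖ ^ q) ^ ((p - N) / p - 1 / q)) ^ p :=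
          Real.rpow_le_rpow (norm_nonneg _) (norm_fderiv_profile_le hq _ c x) hp0.le
      _ = K ^ p * (1 + ‖x‖ ^ q) ^ (-((N : ℝ) - 1)) := by
          rw [Real.mul_rpow hK0 (by positivity), ← Real.rpow_mul hu.le]
          congr 2
          rw [hqdef]
          field_simp
          ring
      _ ≤ K ^ p * (2 ^ (q * (N - 1 : ℝ)) * (1 + ‖x‖) ^ (-(q * (N - 1 : ℝ)))) := by
          gcongr
          exact one_add_rpow_neg_le hq (by linarith) (norm_nonneg x)
      _ = _ := by ring

/-- The density at parameter `ε` is the `L¹`-normalized dilation, by `r = ε ^ ((p - 1) / p)`, of the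
density at parameter `1`. -/
lemma talenti_density_scaling (N : ℕ) (p C : ℝ) (hp1 : 1 < p)
    (Φ : ℝ → EuclideanSpace ℝ (Fin N) → ℝ)
    (hΦ : ∀ ε : ℝ, ∀ x : EuclideanSpace ℝ (Fin N),
      Φ ε x = C * ε ^ ((N - p) / p ^ 2) * (ε + ‖x‖ ^ (p / (p - 1))) ^ ((p - N) / p))
    {ε : ℝ} (hε : 0 < ε) (x : EuclideanSpace ℝ (Fin N)) :
    ‖fderiv ℝ (Φ ε) x‖ ^ p = ((ε ^ ((p - 1) / p)) ^ N)⁻¹ *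
      ‖fderiv ℝ (Φ 1) ((ε ^ ((p - 1) / p))⁻¹ • x)‖ ^ p := by
  have hp' : 0 < p - 1 := by linarith
  have hp0 : 0 < p := by linarith
  set r := ε ^ ((p - 1) / p) with hr
  have hr0 : 0 < r := Real.rpow_pos_of_pos hε _
  have hrq : r ^ (p / (p - 1)) = ε := by
    rw [hr, ← Real.rpow_mul hε.le, div_mul_div_cancel₀ hp0.ne', div_self hp'.ne', Real.rpow_one]
  have hfun : Φ ε = r ^ ((p - N) / p) • (fun y => Φ 1 (r⁻¹ • y)) := by
    funext y
    have hy : 0 ≤ ‖y‖ ^ (p / (p - 1)) := by positivity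
    have e1 : ε + ‖y‖ ^ (p / (p - 1)) = ε * (1 + ‖r⁻¹ • y‖ ^ (p / (p - 1))) := by
      rw [norm_smul, Real.mul_rpow (norm_nonneg _) (norm_nonneg _), Real.norm_eq_abs,
        abs_of_pos (inv_pos.2 hr0), Real.inv_rpow hr0.le, hrq]
      field_simp
    have e2 : ε ^ (((N : ℝ) - p) / p ^ 2) * ε ^ ((p - N) / p) = r ^ ((p - N) / p) := by
      rw [hr, ← Real.rpow_mul hε.le, ← Real.rpow_add hε]
      congr 1
      field_simp
      ring
    simp only [Pi.smul_apply, smul_eq_mul]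
    rw [hΦ, hΦ, e1, Real.mul_rpow hε.le (by positivity), Real.one_rpow, ← e2]
    ring
  have hgrad : ‖fderiv ℝ (Φ ε) x‖ = r ^ (-(N : ℝ) / p) * ‖fderiv ℝ (Φ 1) (r⁻¹ • x)‖ := by
    rw [hfun, fderiv_const_smul_field, Pi.smul_apply, fderiv_comp_smul, norm_smul, norm_smul,
      Real.norm_eq_abs, Real.norm_eq_abs, abs_of_pos (inv_pos.2 hr0),
      abs_of_pos (Real.rpow_pos_of_pos hr0 _), ← mul_assoc, ← Real.rpow_neg_one r,
      ← Real.rpow_add hr0]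
    congr 2
    field_simp
    ring
  rw [hgrad, Real.mul_rpow (by positivity) (norm_nonneg _), ← Real.rpow_mul hr0.le,
    div_mul_cancel₀ _ hp0.ne', Real.rpow_neg hr0.le, Real.rpow_natCast]

/-- the `p`-energy density `|∇Φ_ε|^p` of the Talenti extremal family is
integrable and converges weakly-* to `(∫ |∇Φ₁|^p) δ₀` as `ε → 0⁺`. -/
theorem talenti_concentration_gradient (N : ℕ) (hN : 3 ≤ N) (p C : ℝ)
    (hp1 : 1 < p) (hpN : p < N)
    (hC : C = ((N : ℝ) * ((N - p) / (p - 1)) ^ (p - 1)) ^ ((N - p) / p ^ 2))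
    (Φ : ℝ → EuclideanSpace ℝ (Fin N) → ℝ)
    (hΦ : ∀ ε : ℝ, ∀ x : EuclideanSpace ℝ (Fin N),
      Φ ε x = C * ε ^ ((N - p) / p ^ 2) * (ε + ‖x‖ ^ (p / (p - 1))) ^ ((p - N) / p))
    (g : EuclideanSpace ℝ (Fin N) → ℝ) (hgc : Continuous g) (hgb : ∃ M : ℝ, ∀ x, |g x| ≤ M) :
    (∀ ε > (0:ℝ), Integrable (fun x => ‖fderiv ℝ (Φ ε) x‖ ^ p) volume) ∧
    Tendsto (fun ε : ℝ => ∫ x, g x * ‖fderiv ℝ (Φ ε) x‖ ^ p) (nhdsWithin 0 (Set.Ioi 0))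
      (nhds (g 0 * ∫ x, ‖fderiv ℝ (Φ 1) x‖ ^ p)) := by
  obtain ⟨M, hM⟩ := hgb
  have hp0 : 0 < p := by linarith
  have hs : 0 < (p - 1) / p := div_pos (by linarith) hp0
  have hf : Integrable (fun x => ‖fderiv ℝ (Φ 1) x‖ ^ p) volume := by
    have h1 : Φ 1 = fun x => C * (1 + ‖x‖ ^ (p / (p - 1))) ^ ((p - N) / p) := by
      funext x
      rw [hΦ, Real.one_rpow, mul_one]
    rw [h1]
    exact integrable_profile_density N p C hp1 hpN
  have hscale := fun {ε : ℝ} (hε : 0 < ε) => talenti_density_scaling N p C hp1 Φ hΦ hε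
  refine ⟨fun ε hε => ?_, ?_⟩
  · simp_rw [hscale hε]
    exact (hf.comp_smul (inv_ne_zero (Real.rpow_pos_of_pos hε _).ne')).const_mul _
  · have hlim : Tendsto (fun ε : ℝ => ε ^ ((p - 1) / p)) (nhdsWithin 0 (Set.Ioi 0)) (nhds 0) := by
      have := (Real.continuousAt_rpow_const 0 ((p - 1) / p) (Or.inr hs.le)).tendsto
      rw [Real.zero_rpow hs.ne'] at this
      exact this.mono_left nhdsWithin_le_nhds
    have hdct : Tendsto (fun ε : ℝ => ∫ y, g (ε ^ ((p - 1) / p) • y) * ‖fderiv ℝ (Φ 1) y‖ ^ p)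
        (nhdsWithin 0 (Set.Ioi 0)) (nhds (∫ y, g 0 * ‖fderiv ℝ (Φ 1) y‖ ^ p)) := by
      refine tendsto_integral_filter_of_dominated_convergence
        (fun y => M * ‖fderiv ℝ (Φ 1) y‖ ^ p) ?_ ?_ (hf.const_mul M) ?_
      · exact Eventually.of_forall fun ε =>
          (hgc.comp (continuous_const_smul _)).aestronglyMeasurable.mul hf.aestronglyMeasurable
      · refine Eventually.of_forall fun ε => Eventually.of_forall fun y => ?_
        have h0 : 0 ≤ ‖fderiv ℝ (Φ 1) y‖ ^ p := by positivity
        rw [Real.norm_eq_abs, abs_mul, abs_of_nonneg h0]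
        exact mul_le_mul_of_nonneg_right (hM _) h0
      · refine Eventually.of_forall fun y => ?_
        have h1 : Tendsto (fun ε : ℝ => ε ^ ((p - 1) / p) • y) (nhdsWithin 0 (Set.Ioi 0))
            (nhds 0) := by
          simpa using hlim.smul_const y
        exact ((hgc.tendsto 0).comp h1).mul_const _
    rw [integral_const_mul] at hdct
    refine hdct.congr' ?_
    filter_upwards [self_mem_nhdsWithin] with ε hε
    have hr0 : 0 < ε ^ ((p - 1) / p) := Real.rpow_pos_of_pos hε _
    set r := ε ^ ((p - 1) / p) with hr
    have hcv := Measure.integral_comp_inv_smul_of_nonneg volume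
      (fun y => g (r • y) * ‖fderiv ℝ (Φ 1) y‖ ^ p) hr0.le
    simp only [smul_inv_smul₀ hr0.ne', finrank_euclideanSpace_fin, smul_eq_mul] at hcv
    simp_rw [hscale hε, ← hr, mul_left_comm (g _)]
    rw [integral_const_mul, hcv, inv_mul_cancel_left₀ (by positivity)]
end

section
/- Let 1 < p < s be real numbers and c ∈ ℝ. Let (aₙ) and (bₙ) be sequences of nonnegative real numbers and (dₙ), (eₙ) real sequences such that: (i) for every ε > 0 there exists C ≥ 0 with |dₙ| ≤ ε bₙ + C and |eₙ| ≤ ε bₙ + C for all n; (ii) aₙ/p − bₙ/s − dₙ → c as n → ∞; and (iii) (aₙ − bₙ − eₙ)/(1 + aₙ^{1/p}) → 0 as n → ∞. Then the sequences (aₙ) and (bₙ) are bounded. -/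
/-!
Eliminating `aₙ` between the level condition and the derivative condition gives
`(1 - p/s) bₙ = p Lₙ + p dₙ - eₙ - rₙ`, where `Lₙ = aₙ/p - bₙ/s - dₙ → c` and
`rₙ = aₙ - bₙ - eₙ`. Since `aₙ ^ (1/p) ≤ 1 + aₙ`, eventually `|rₙ| ≤ η (2 + aₙ)` for any
prescribed `η > 0`, and the level condition bounds `aₙ` by a constant plus `2 bₙ`. For small
`ε` and `η` the terms in `bₙ` on the right are absorbed on the left because `1 - p/s > 0`, so
`bₙ`, and then `aₙ`, is eventually bounded; finitely many terms do not matter.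
-/

open Filter

/-- abstract boundedness of Palais–Smale sequences: if `(aₙ)`, `(bₙ)` are
nonnegative, the perturbation terms `(dₙ)`, `(eₙ)` are controlled by `ε bₙ + C` for every
`ε > 0`, `aₙ/p − bₙ/s − dₙ → c` and `(aₙ − bₙ − eₙ)/(1 + aₙ^{1/p}) → 0`, then `(aₙ)` and
`(bₙ)` are bounded. -/
theorem palais_smale_bounded (p s c : ℝ) (hp : 1 < p) (hps : p < s)
    (a b d e : ℕ → ℝ) (ha : ∀ n, 0 ≤ a n) (hb : ∀ n, 0 ≤ b n)
    (hde : ∀ ε > (0:ℝ), ∃ C ≥ (0:ℝ), ∀ n, |d n| ≤ ε * b n + C ∧ |e n| ≤ ε * b n + C)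
    (hlevel : Tendsto (fun n => a n / p - b n / s - d n) atTop (nhds c))
    (hderiv : Tendsto (fun n => (a n - b n - e n) / (1 + a n ^ (1 / p))) atTop (nhds 0)) :
    ∃ M : ℝ, ∀ n, a n ≤ M ∧ b n ≤ M := by
  have hp0 : 0 < p := by linarith
  have hs0 : 0 < s := by linarith
  obtain ⟨δ, hδ⟩ : ∃ δ, δ = 1 - p / s := ⟨_, rfl⟩
  have hδ0 : 0 < δ := by
    rw [hδ, sub_pos, div_lt_one hs0]
    exact hps
  have hδ1 : δ < 1 := by
    have : 0 < p / s := by positivity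
    linarith
  -- With this `ε` the perturbation terms `p dₙ - eₙ` contribute at most `(δ / 4) bₙ`.
  obtain ⟨ε, hε⟩ : ∃ ε, ε = δ / (4 * (p + 1)) := ⟨_, rfl⟩
  have hε0 : 0 < ε := by rw [hε]; positivity
  have hpε : p * ε + ε = δ / 4 := by
    rw [hε]
    field_simp
  obtain ⟨C, -, hC⟩ := hde ε hε0
  have hL : ∀ᶠ n in atTop, |a n / p - b n / s - d n - c| < 1 := by
    simpa only [Real.dist_eq] using (Metric.tendsto_nhds.1 hlevel) 1 one_pos
  have hR : ∀ᶠ n in atTop, |(a n - b n - e n) / (1 + a n ^ (1 / p))| < δ / 8 := by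
    simpa only [Real.dist_eq, sub_zero] using
      (Metric.tendsto_nhds.1 hderiv) (δ / 8) (by positivity)
  obtain ⟨A, hA⟩ : ∃ A, A = p * (|c| + 1) + p * C := ⟨_, rfl⟩
  obtain ⟨B, hB⟩ : ∃ B, B = 2 * (A + C + δ / 8 * (2 + A)) / δ := ⟨_, rfl⟩
  have key : ∀ᶠ n in atTop, b n ≤ B ∧ a n ≤ A + 2 * B := by
    filter_upwards [hL, hR] with n hLn hRn
    obtain ⟨hd, he⟩ := hC n
    have han := ha n
    have hbn := hb n
    have hpow : a n ^ (1 / p) ≤ 1 + a n := by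
      have hexp : 1 / p ≤ 1 := by
        rw [div_le_one hp0]
        exact hp.le
      calc a n ^ (1 / p) ≤ (1 + a n) ^ (1 / p) :=
            Real.rpow_le_rpow han (by linarith) (by positivity)
        _ ≤ (1 + a n) ^ (1 : ℝ) := Real.rpow_le_rpow_of_exponent_le (by linarith) hexp
        _ = 1 + a n := Real.rpow_one _
    have hden : 0 < 1 + a n ^ (1 / p) := by
      have := Real.rpow_nonneg han (1 / p)
      linarith
    have hr : |a n - b n - e n| ≤ δ / 8 * (2 + a n) := by
      rw [abs_div, abs_of_pos hden, div_lt_iff₀ hden] at hRn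
      refine hRn.le.trans (mul_le_mul_of_nonneg_left (by linarith) (by positivity))
    have hlev : a n / p - b n / s - d n ≤ |c| + 1 := by
      have := (abs_lt.1 hLn).2
      linarith [le_abs_self c]
    have hd' : p * d n ≤ p * (ε * b n + C) :=
      mul_le_mul_of_nonneg_left ((le_abs_self _).trans hd) hp0.le
    have ha1 : a n ≤ A + (1 - δ) * b n + p * ε * b n := by
      have h1 := mul_le_mul_of_nonneg_left hlev hp0.le
      have h2 : p * (a n / p - b n / s - d n) = a n - (1 - δ) * b n - p * d n := by
        rw [hδ]
        field_simp
        ring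
      rw [h2] at h1
      rw [hA]
      linarith
    have hpεb : p * ε * b n + ε * b n = δ / 4 * b n := by rw [← hpε]; ring
    have hεb : 0 ≤ ε * b n := by positivity
    have hδb : 0 ≤ δ * b n := by positivity
    have hδb' : δ * b n ≤ b n := mul_le_of_le_one_left hbn hδ1.le
    have ha2 : a n ≤ A + 2 * b n := by linarith
    have hr2 : δ / 8 * (2 + a n) ≤ δ / 8 * (2 + (A + 2 * b n)) :=
      mul_le_mul_of_nonneg_left (by linarith) (by positivity)
    have hbB : b n ≤ B := by
      rw [hB, le_div_iff₀ hδ0]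
      have h1 := (abs_le.1 hr).1
      have h2 := (abs_le.1 he).1
      linarith
    exact ⟨hbB, by linarith⟩
  have hbB : BddAbove (Set.range b) :=
    IsBoundedUnder.bddAbove_range ⟨B, eventually_map.2 (key.mono fun _ h => h.1)⟩
  have haB : BddAbove (Set.range a) :=
    IsBoundedUnder.bddAbove_range ⟨A + 2 * B, eventually_map.2 (key.mono fun _ h => h.2)⟩
  obtain ⟨M₁, h₁⟩ := haB
  obtain ⟨M₂, h₂⟩ := hbB
  exact ⟨max M₁ M₂, fun n => ⟨(h₁ ⟨n, rfl⟩).trans (le_max_left _ _),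
    (h₂ ⟨n, rfl⟩).trans (le_max_right _ _)⟩⟩
end
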